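/- Let X be a finite-dimensional polyhedral real Banach space. Then the following are equivalent: (a) the Birkhoff-James orthogonality is C-approximately symmetric in X, i.e., there exists ε ∈ [0,1) such that for all x, y ∈ X, x ⊥_B y implies y ⊥_B^ε x; (b) every y ∈ S_X is C-approximately left-symmetric, i.e., for each y ∈ S_X there exists ε_y ∈ [0,1) such that for all z ∈ X, y ⊥_B z implies z ⊥_B^{ε_y} y; (c) every x ∈ S_X has the local property (P); (d) every extreme point of the closed unit ball of X has the local property (P). -/

import Mathlib

/-!
A supporting functional of `y` that is at most `ε ‖x‖` in absolute value at `x` certifies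
`y ⊥_B^ε x`, and by Hahn–Banach there always is one. In these terms, (P) at `x` says that each
unit vector `y` with `x ⊥_B y` has a supporting functional `f` with `|f x| < ‖x‖`, and (b) asks for
a bound `|f x| ≤ ε ‖x‖` with `ε < 1` independent of `y`; so (b) implies (c).

To return from (P) at the extreme points to (a), write a unit vector as a convex combination of
the finite set `V` of extreme points. Its supporting functionals depend only on which weights are
nonzero, so only finitely many sets `J(y)` occur and (P) holds on `V` with one bound `ε < 1`. A unit
vector `x` gives some `v ∈ V` weight `a ≥ 1 / |V|`. If `x ⊥_B y`, then `v ⊥_B y`, and a supporting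
functional `f` of `y` with `|f v| ≤ ε` satisfies `|f x| ≤ a ε + (1 - a) ≤ 1 - (1 - ε) / |V|`.
-/

open Set Metric

section Defs

variable {E : Type*} [NormedAddCommGroup E] [NormedSpace ℝ E]

/-- Birkhoff-James orthogonality: `x ⊥_B y` iff `‖x + t • y‖ ≥ ‖x‖` for all real `t`. -/
def BJOrth (x y : E) : Prop := ∀ t : ℝ, ‖x‖ ≤ ‖x + t • y‖

/-- Dragomir-type approximate orthogonality: `x ⊥_D^ε y` iff
`‖x + t • y‖ ≥ √(1 - ε²) ‖x‖` for all real `t`. -/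
def DOrth (ε : ℝ) (x y : E) : Prop :=
  ∀ t : ℝ, Real.sqrt (1 - ε ^ 2) * ‖x‖ ≤ ‖x + t • y‖

/-- Chmieliński-type approximate orthogonality: `x ⊥_B^ε y` iff
`‖x + t • y‖² ≥ ‖x‖² - 2 ε ‖x‖ ‖t • y‖` for all real `t`. -/
def BOrth (ε : ℝ) (x y : E) : Prop :=
  ∀ t : ℝ, ‖x‖ ^ 2 - 2 * ε * ‖x‖ * ‖t • y‖ ≤ ‖x + t • y‖ ^ 2

/-- The set of supporting functionals at `x`. -/
def SuppJ (x : E) : Set (E →L[ℝ] ℝ) := {f | ‖f‖ = 1 ∧ f x = ‖x‖}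

/-- The local property (P) at `x`: there is no unit vector `y` with `x ⊥_B y` such that
every supporting functional of `y` (or its negative) supports `x`. -/
def LocalP (x : E) : Prop :=
  ¬ ∃ y : E, ‖y‖ = 1 ∧ BJOrth x y ∧ ∀ f ∈ SuppJ y, f ∈ SuppJ x ∨ -f ∈ SuppJ x

end Defs

lemma convexHull_extremePoints_of_finite {E : Type*} [AddCommGroup E] [Module ℝ E]
    [TopologicalSpace E] [T2Space E] [IsTopologicalAddGroup E] [ContinuousSMul ℝ E]
    [LocallyConvexSpace ℝ E] {s : Set E} (hcomp : IsCompact s) (hconv : Convex ℝ s)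
    (hfin : (extremePoints ℝ s).Finite) : convexHull ℝ (extremePoints ℝ s) = s := by
  rw [← (hfin.isClosed_convexHull ℝ).closure_eq, closure_convexHull_extremePoints hcomp hconv]

section Functionals

variable {E : Type*} [NormedAddCommGroup E] [NormedSpace ℝ E] {ε : ℝ} {x y : E}

lemma abs_apply_le_norm {F : Type*} [SeminormedAddCommGroup F] [NormedSpace ℝ F] {f : F →L[ℝ] ℝ}
    (hf : ‖f‖ ≤ 1) (x : F) : |f x| ≤ ‖x‖ := by
  simpa using f.le_of_opNorm_le hf x

lemma mem_suppJ_of_norm_le_one {f : E →L[ℝ] ℝ} (hx : x ≠ 0) (hf : ‖f‖ ≤ 1) (hfx : f x = ‖x‖) :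
    f ∈ SuppJ x := by
  refine ⟨hf.antisymm (le_of_mul_le_mul_right ?_ (norm_pos_iff.2 hx)), hfx⟩
  simpa [hfx] using f.le_opNorm x

lemma mem_suppJ_or_neg_mem_suppJ_iff {f : E →L[ℝ] ℝ} (hf : ‖f‖ = 1) :
    f ∈ SuppJ x ∨ -f ∈ SuppJ x ↔ |f x| = ‖x‖ := by
  simp [SuppJ, hf, abs_eq (norm_nonneg x), neg_eq_iff_eq_neg]

lemma localP_iff : LocalP x ↔
    ∀ y : E, ‖y‖ = 1 → BJOrth x y → ∃ f ∈ SuppJ y, |f x| < ‖x‖ := by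
  simp only [LocalP, not_exists, not_and, not_forall, exists_prop]
  refine forall₃_congr fun y _ _ => exists_congr fun f => and_congr_right fun hf => ?_
  rw [mem_suppJ_or_neg_mem_suppJ_iff hf.1, (abs_apply_le_norm hf.1.le x).lt_iff_ne]

lemma bOrth_iff_forall_sub_le (hε : 0 ≤ ε) :
    BOrth ε x y ↔ ∀ t : ℝ, ‖x‖ - ε * ‖t • y‖ ≤ ‖x + t • y‖ := by
  refine ⟨fun h t => ?_, fun h t => ?_⟩
  · by_contra! hlt
    set e := ε * ‖t • y‖ with he
    set d := ‖x‖ - ‖x + t • y‖ with hd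
    have he0 : 0 ≤ e := by positivity
    have hed : e < d := by linarith [hd]
    have hd0 : 0 < d := he0.trans_lt hed
    have hdx : d ≤ ‖x‖ := by linarith [hd, norm_nonneg (x + t • y)]
    -- By convexity the norm drops by at least `s * d` at `x + (s * t) • y`, against a tolerance of
    -- first order `s * e`; this value of `s` is small enough for the second order term.
    set s := (d - e) / d
    have hsd : s * d = d - e := div_mul_cancel₀ _ hd0.ne'
    have hs0 : 0 < s := div_pos (by linarith) hd0
    have hs1 : s ≤ 1 := (div_le_one hd0).2 (by linarith)
    have hconv : ‖x + (s * t) • y‖ ≤ ‖x‖ - s * d := by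
      calc ‖x + (s * t) • y‖ = ‖(1 - s) • x + s • (x + t • y)‖ := by congr 1; module
        _ ≤ (1 - s) * ‖x‖ + s * ‖x + t • y‖ := by
          refine norm_add_le_of_le ?_ ?_ <;> rw [norm_smul, Real.norm_of_nonneg (by linarith)]
        _ = ‖x‖ - s * d := by ring
    have hsq : ‖x‖ ^ 2 - 2 * (s * e) * ‖x‖ ≤ (‖x‖ - s * d) ^ 2 := by
      calc ‖x‖ ^ 2 - 2 * (s * e) * ‖x‖ = ‖x‖ ^ 2 - 2 * ε * ‖x‖ * ‖(s * t) • y‖ := by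
            rw [mul_smul, norm_smul s, Real.norm_of_nonneg hs0.le, he]; ring
        _ ≤ ‖x + (s * t) • y‖ ^ 2 := h (s * t)
        _ ≤ (‖x‖ - s * d) ^ 2 := by gcongr
    have : 2 * (d - e) * ‖x‖ ≤ (d - e) * d := by
      refine le_of_mul_le_mul_left ?_ hs0
      linear_combination hsq + s * d * hsd
    nlinarith
  · rcases le_total 0 (‖x‖ - ε * ‖t • y‖) with hpos | hneg
    · linarith [pow_le_pow_left₀ hpos (h t) 2, sq_nonneg (ε * ‖t • y‖)]
    · nlinarith [norm_nonneg x, sq_nonneg ‖x + t • y‖]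

/-- The functional norms `(x, 0)` in the quotient of the `ℓ¹`-sum `E ⊕ ℝ` by the line through
`(y, c)`: the hypothesis says that `(x, 0)` has norm `‖x‖` there, and `(y, 0)` is identified with
`(0, -c)`. -/
lemma exists_dual_vector_abs_apply_le {c : ℝ} (hc : 0 ≤ c)
    (h : ∀ t : ℝ, ‖x‖ ≤ ‖x + t • y‖ + |t| * c) :
    ∃ f : E →L[ℝ] ℝ, ‖f‖ ≤ 1 ∧ f x = ‖x‖ ∧ |f y| ≤ c := by
  let L : Submodule ℝ (WithLp 1 (E × ℝ)) := ℝ ∙ WithLp.toLp 1 (y, c)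
  let π (z : E) (r : ℝ) : WithLp 1 (E × ℝ) ⧸ L := L.mkQ (WithLp.toLp 1 (z, r))
  have hπ (z : E) (r : ℝ) : ‖π z r‖ ≤ ‖z‖ + |r| :=
    (Submodule.Quotient.norm_mk_le _ _).trans_eq (WithLp.prod_norm_eq_of_L1 _)
  have hπx : ‖x‖ ≤ ‖π x 0‖ := by
    refine QuotientAddGroup.le_norm_iff.2 fun p hp => ?_
    obtain ⟨t, ht⟩ := Submodule.mem_span_singleton.1 ((Submodule.Quotient.eq L).1 hp)
    obtain rfl := sub_eq_iff_eq_add'.1 ht.symm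
    simpa [WithLp.prod_norm_eq_of_L1, abs_of_nonneg hc] using h t
  have hπy : π y 0 = -π 0 c := by
    have hL : L.mkQ (WithLp.toLp 1 (y, c)) = 0 :=
      (Submodule.Quotient.mk_eq_zero L).2 (Submodule.mem_span_singleton_self _)
    rw [← add_eq_zero_iff_eq_neg, ← map_add, ← WithLp.toLp_add, Prod.mk_add_mk, add_zero,
      zero_add, hL]
  obtain ⟨g, hg, hgx⟩ := exists_dual_vector'' ℝ (π x 0)
  let f : E →ₗ[ℝ] ℝ := g.toLinearMap ∘ₗ L.mkQ ∘ₗ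
    (WithLp.linearEquiv 1 ℝ (E × ℝ)).symm.toLinearMap ∘ₗ LinearMap.inl ℝ E ℝ
  have hf (z : E) : f z = g (π z 0) := rfl
  have hf_le (z : E) : |f z| ≤ 1 * ‖z‖ := by
    simpa [hf] using (abs_apply_le_norm hg _).trans (hπ z 0)
  refine ⟨f.mkContinuous 1 hf_le, f.mkContinuous_norm_le zero_le_one hf_le, ?_, ?_⟩ <;>
    rw [LinearMap.mkContinuous_apply, hf]
  · rw [hgx]
    exact le_antisymm (by simpa using hπ x 0) hπx
  · rw [hπy, map_neg, abs_neg]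
    simpa [abs_of_nonneg hc] using (abs_apply_le_norm hg _).trans (hπ 0 c)

theorem bOrth_iff_exists_suppJ (hε : 0 ≤ ε) (hx : x ≠ 0) :
    BOrth ε x y ↔ ∃ f ∈ SuppJ x, |f y| ≤ ε * ‖y‖ := by
  rw [bOrth_iff_forall_sub_le hε]
  refine ⟨fun h => ?_, fun ⟨f, hf, hfy⟩ t => ?_⟩
  · obtain ⟨f, hf, hfx, hfy⟩ := exists_dual_vector_abs_apply_le (c := ε * ‖y‖) (by positivity)
      fun t => by simpa [norm_smul, mul_left_comm] using h t
    exact ⟨f, mem_suppJ_of_norm_le_one hx hf hfx, hfy⟩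
  · have hft : |f (t • y)| ≤ ε * ‖t • y‖ := by
      rw [map_smul, smul_eq_mul, abs_mul, norm_smul, mul_left_comm, Real.norm_eq_abs]
      gcongr
    calc ‖x‖ - ε * ‖t • y‖ ≤ f (x + t • y) := by
          rw [map_add, hf.2]
          linarith [neg_le_of_abs_le hft]
      _ ≤ ‖x + t • y‖ := (le_abs_self _).trans (abs_apply_le_norm hf.1.le _)

lemma localP_of_bOrth (hx : ‖x‖ = 1) (hε : ε ∈ Ico 0 1) (h : ∀ z, BJOrth x z → BOrth ε z x) :
    LocalP x := by
  refine localP_iff.2 fun y hy hxy => ?_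
  have hy0 : y ≠ 0 := norm_ne_zero_iff.1 (hy ▸ one_ne_zero)
  obtain ⟨f, hf, hfx⟩ := (bOrth_iff_exists_suppJ hε.1 hy0).1 (h y hxy)
  exact ⟨f, hf, by linarith [hε.2, hx ▸ hfx]⟩

lemma mem_suppJ_sum_iff {ι : Type*} {s : Finset ι} {v : ι → E} {f : E →L[ℝ] ℝ}
    (hv : ‖∑ i ∈ s, v i‖ = ∑ i ∈ s, ‖v i‖) :
    f ∈ SuppJ (∑ i ∈ s, v i) ↔ ‖f‖ = 1 ∧ ∀ i ∈ s, f (v i) = ‖v i‖ := by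
  refine and_congr_right fun hf => ?_
  rw [hv, map_sum]
  exact Finset.sum_eq_sum_iff_of_le fun i _ => (le_abs_self _).trans (abs_apply_le_norm hf.le _)

lemma suppJ_sum_smul {ι : Type*} {s : Finset ι} {w : ι → ℝ} {v : ι → E}
    (hw0 : ∀ i ∈ s, 0 ≤ w i) (hw1 : ∑ i ∈ s, w i = 1) (hv : ∀ i ∈ s, ‖v i‖ ≤ 1)
    (hsum : ‖∑ i ∈ s, w i • v i‖ = 1) :
    SuppJ (∑ i ∈ s, w i • v i) = {f | ‖f‖ = 1 ∧ ∀ i ∈ s, w i ≠ 0 → f (v i) = ‖v i‖} := by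
  have hnorm : ‖∑ i ∈ s, w i • v i‖ = ∑ i ∈ s, ‖w i • v i‖ := by
    refine (norm_sum_le _ _).antisymm ?_
    rw [hsum, ← hw1]
    refine Finset.sum_le_sum fun i hi => ?_
    rw [norm_smul, Real.norm_of_nonneg (hw0 i hi)]
    exact mul_le_of_le_one_right (hw0 i hi) (hv i hi)
  ext f
  rw [mem_suppJ_sum_iff hnorm]
  refine and_congr_right fun _ => forall₂_congr fun i hi => ?_
  rw [map_smul, norm_smul, Real.norm_of_nonneg (hw0 i hi), smul_eq_mul, mul_eq_mul_left_iff]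
  tauto

end Functionals

section Orthogonality

variable {E : Type*} [NormedAddCommGroup E] [NormedSpace ℝ E] {ε : ℝ} {x y : E}

lemma BJOrth.smul (h : BJOrth x y) {a : ℝ} (ha : a ≠ 0) (b : ℝ) :
    BJOrth (a • x) (b • y) := by
  intro t
  have hfactor : a • x + t • b • y = a • (x + (a⁻¹ * (t * b)) • y) := by
    rw [smul_add, smul_smul, smul_smul, mul_inv_cancel_left₀ ha]
  rw [hfactor, norm_smul, norm_smul]
  gcongr
  exact h _

lemma BOrth.smul (h : BOrth ε x y) {a : ℝ} (ha : a ≠ 0) (b : ℝ) :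
    BOrth ε (a • x) (b • y) := by
  intro t
  set r := a⁻¹ * (t * b) with hr
  have htb : t • b • y = a • r • y := by
    rw [hr, smul_smul, smul_smul, mul_inv_cancel_left₀ ha]
  rw [htb, ← smul_add]
  simp only [norm_smul a]
  calc (‖a‖ * ‖x‖) ^ 2 - 2 * ε * (‖a‖ * ‖x‖) * (‖a‖ * ‖r • y‖)
      = ‖a‖ ^ 2 * (‖x‖ ^ 2 - 2 * ε * ‖x‖ * ‖r • y‖) := by ring
    _ ≤ ‖a‖ ^ 2 * ‖x + r • y‖ ^ 2 := by gcongr; exact h r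
    _ = (‖a‖ * ‖x + r • y‖) ^ 2 := by ring

lemma bOrth_of_bJOrth_of_forall_norm_eq_one
    (h : ∀ x y : E, ‖x‖ = 1 → ‖y‖ = 1 → BJOrth x y → BOrth ε y x) (hxy : BJOrth x y) :
    BOrth ε y x := by
  rcases eq_or_ne x 0 with rfl | hx
  · simp [BOrth]
  rcases eq_or_ne y 0 with rfl | hy
  · simp [BOrth]
  have hx' := norm_ne_zero_iff.2 hx
  have hy' := norm_ne_zero_iff.2 hy
  have hunit : BOrth ε (‖y‖⁻¹ • y) (‖x‖⁻¹ • x) :=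
    h _ _ (norm_smul_inv_norm (𝕜 := ℝ) hx) (norm_smul_inv_norm (𝕜 := ℝ) hy)
      (hxy.smul (inv_ne_zero hx') _)
  simpa only [smul_inv_smul₀ hx', smul_inv_smul₀ hy'] using hunit.smul hy' ‖x‖

lemma BJOrth.of_norm_sub_smul_le {v : E} {a : ℝ} (h : BJOrth x y) (ha : 0 < a)
    (hv : ‖x - a • v‖ ≤ ‖x‖ - a * ‖v‖) : BJOrth v y := by
  refine fun t => le_of_mul_le_mul_left ?_ ha
  calc a * ‖v‖ ≤ ‖x‖ - ‖x - a • v‖ := by linarith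
    _ ≤ ‖x + (a * t) • y‖ - ‖x - a • v‖ := by gcongr; exact h _
    _ ≤ ‖(x + (a * t) • y) - (x - a • v)‖ := norm_sub_norm_le _ _
    _ = ‖a • (v + t • y)‖ := by congr 1; module
    _ = a * ‖v + t • y‖ := by rw [norm_smul, Real.norm_of_nonneg ha.le]

end Orthogonality

section Polyhedral

open Filter Topology

variable {E : Type*} [NormedAddCommGroup E] [NormedSpace ℝ E]

lemma exists_mem_norm_sub_smul_le {V : Finset E} (hV : ∀ v ∈ V, ‖v‖ ≤ 1) {x : E}
    (hx : x ∈ convexHull ℝ (V : Set E)) :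
    ∃ v ∈ V, ∃ a : ℝ, 1 / V.card ≤ a ∧ ‖x - a • v‖ ≤ 1 - a := by
  classical
  obtain ⟨w, hw0, hw1, rfl⟩ := Finset.mem_convexHull'.1 hx
  have hne : V.Nonempty := Finset.nonempty_of_sum_ne_zero (hw1 ▸ one_ne_zero)
  obtain ⟨v, hv, hwv⟩ : ∃ v ∈ V, 1 / (V.card : ℝ) ≤ w v := by
    refine Finset.exists_le_of_sum_le hne ?_
    simp [hw1, hne.ne_empty]
  refine ⟨v, hv, w v, hwv, ?_⟩
  rw [← hw1, ← Finset.sum_erase_eq_sub hv, ← Finset.sum_erase_eq_sub hv]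
  refine norm_sum_le_of_le _ fun u hu => ?_
  have huV := Finset.mem_of_mem_erase hu
  rw [norm_smul, Real.norm_of_nonneg (hw0 u huV)]
  exact mul_le_of_le_one_right (hw0 u huV) (hV u huV)

variable {V : Finset E} (hV : convexHull ℝ (V : Set E) = closedBall 0 1)
include hV

lemma norm_le_one_of_convexHull_eq_closedBall {v : E} (hv : v ∈ V) : ‖v‖ ≤ 1 :=
  mem_closedBall_zero_iff.1 (hV ▸ subset_convexHull ℝ _ hv)

lemma finite_image_suppJ_sphere : (SuppJ '' sphere (0 : E) 1).Finite := by
  let J (S : Set E) : Set (E →L[ℝ] ℝ) := {f | ‖f‖ = 1 ∧ ∀ v ∈ S, f v = ‖v‖}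
  refine (V.finite_toSet.finite_subsets.image J).subset ?_
  rintro - ⟨y, hy, rfl⟩
  rw [mem_sphere_zero_iff_norm] at hy
  obtain ⟨w, hw0, hw1, rfl⟩ := Finset.mem_convexHull'.1 (hV ▸ mem_closedBall_zero_iff.2 hy.le)
  have hV1 (v) (hv : v ∈ V) : ‖v‖ ≤ 1 := norm_le_one_of_convexHull_eq_closedBall hV hv
  rw [suppJ_sum_smul hw0 hw1 hV1 hy]
  refine ⟨{v | v ∈ V ∧ w v ≠ 0}, fun v hv => hv.1, ?_⟩
  simp only [J, mem_ofPred_eq, and_imp]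

lemma exists_forall_exists_suppJ_abs_apply_le (hP : ∀ v ∈ V, LocalP v) :
    ∃ ε ∈ Ico (0 : ℝ) 1, ∀ v ∈ V, ∀ y : E, ‖y‖ = 1 → BJOrth v y →
      ∃ f ∈ SuppJ y, |f v| ≤ ε := by
  have huniform : ∀ᶠ ε : ℝ in 𝓝[<] 1, ∀ p ∈ (V : Set E) ×ˢ (SuppJ '' sphere (0 : E) 1),
      (∃ f ∈ p.2, |f p.1| < 1) → ∃ f ∈ p.2, |f p.1| ≤ ε := by
    refine (eventually_all_finite (V.finite_toSet.prod (finite_image_suppJ_sphere hV))).2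
      fun p _ => eventually_imp_distrib_left.2 fun ⟨f, hf, hlt⟩ => ?_
    filter_upwards [Ioo_mem_nhdsLT hlt] with ε hε using ⟨f, hf, hε.1.le⟩
  obtain ⟨ε, hε, hε01⟩ := (huniform.and (Ico_mem_nhdsLT zero_lt_one)).exists
  refine ⟨ε, hε01, fun v hv y hy hvy => hε (v, SuppJ y) ⟨hv, y, by simpa using hy, rfl⟩ ?_⟩
  obtain ⟨f, hf, hfv⟩ := localP_iff.1 (hP v hv) y hy hvy
  exact ⟨f, hf, hfv.trans_le (norm_le_one_of_convexHull_eq_closedBall hV hv)⟩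

theorem exists_forall_bOrth_of_localP (hP : ∀ v ∈ V, LocalP v) :
    ∃ ε ∈ Ico (0 : ℝ) 1, ∀ x y : E, BJOrth x y → BOrth ε y x := by
  obtain ⟨ε, ⟨hε0, hε1⟩, hε⟩ := exists_forall_exists_suppJ_abs_apply_le hV hP
  have hcard : 0 < V.card := by
    have hne : (convexHull ℝ (V : Set E)).Nonempty := hV ▸ nonempty_closedBall.2 zero_le_one
    exact Finset.card_pos.2 (by simpa using hne)
  set δ : ℝ := 1 / V.card with hδ
  have hδ0 : 0 < δ := by positivity
  have hδ1 : δ ≤ 1 := by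
    rw [hδ, div_le_one (by positivity)]
    exact_mod_cast hcard
  have hε' : 0 ≤ 1 - (1 - ε) * δ := by nlinarith
  refine ⟨1 - (1 - ε) * δ, ⟨hε', by nlinarith⟩, fun _ _ =>
    bOrth_of_bJOrth_of_forall_norm_eq_one fun x y hx hy hxy => ?_⟩
  have hV1 (v) (hv : v ∈ V) : ‖v‖ ≤ 1 := norm_le_one_of_convexHull_eq_closedBall hV hv
  obtain ⟨v, hv, a, ha, hxv⟩ :=
    exists_mem_norm_sub_smul_le hV1 (hV ▸ mem_closedBall_zero_iff.2 hx.le)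
  have ha0 : 0 < a := hδ0.trans_le ha
  have hvy : BJOrth v y := hxy.of_norm_sub_smul_le ha0 <| hxv.trans <| by
    rw [hx]
    gcongr
    exact mul_le_of_le_one_right ha0.le (hV1 v hv)
  obtain ⟨f, hf, hfv⟩ := hε v hv y hy hvy
  refine (bOrth_iff_exists_suppJ hε' (norm_ne_zero_iff.1 (hy ▸ one_ne_zero))).2 ⟨f, hf, ?_⟩
  calc |f x| = |a * f v + f (x - a • v)| := by simp
    _ ≤ a * |f v| + ‖x - a • v‖ := by
      refine (abs_add_le _ _).trans (add_le_add ?_ (abs_apply_le_norm hf.1.le _))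
      rw [abs_mul, abs_of_pos ha0]
    _ ≤ a * ε + (1 - a) := by gcongr
    _ ≤ (1 - (1 - ε) * δ) * ‖x‖ := by rw [hx]; nlinarith

end Polyhedral

theorem stmt_15 {X : Type*} [NormedAddCommGroup X] [NormedSpace ℝ X]
    [FiniteDimensional ℝ X]
    (hpoly : (Set.extremePoints ℝ (Metric.closedBall (0 : X) 1)).Finite) :
    List.TFAE
      [ ∃ ε ∈ Set.Ico (0 : ℝ) 1, ∀ x y : X, BJOrth x y → BOrth ε y x,
        ∀ y : X, ‖y‖ = 1 →
          ∃ ε ∈ Set.Ico (0 : ℝ) 1, ∀ z : X, BJOrth y z → BOrth ε z y,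
        ∀ x : X, ‖x‖ = 1 → LocalP x,
        ∀ x ∈ Set.extremePoints ℝ (Metric.closedBall (0 : X) 1), LocalP x ] := by
  tfae_have 1 → 2 := fun ⟨ε, hε, h⟩ y _ => ⟨ε, hε, fun z => h y z⟩
  tfae_have 2 → 3 := fun h x hx =>
    let ⟨_, hε, horth⟩ := h x hx
    localP_of_bOrth hx hε horth
  tfae_have 3 → 4 := fun h x hx ⟨y, hy, hxy⟩ =>
    have : Nontrivial X := ⟨y, 0, norm_ne_zero_iff.1 (hy ▸ one_ne_zero)⟩
    h x (by simpa using extremePoints_closedBall_subset_sphere hx) ⟨y, hy, hxy⟩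
  tfae_have 4 → 1 := fun h => by
    have : ProperSpace X := FiniteDimensional.proper ℝ X
    have hball := convexHull_extremePoints_of_finite (isCompact_closedBall (0 : X) 1)
      (convex_closedBall 0 1) hpoly
    exact exists_forall_bOrth_of_localP (V := hpoly.toFinset) (by simpa using hball)
      (by simpa using h)
  tfae_finish
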